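/- arXiv:2410.15421 — 3 statements merged into one kernel-verified Lean document; each statement's English description precedes it below -/
import Mathlib

section
/- For any warping function γ ∈ Γ₁ with inverse function γ⁻¹, the CLR transform of the inverse satisfies, for all t ∈ [0,1], ψ_B(γ⁻¹)(t) = −ψ_B(γ)(γ⁻¹(t)) + ∫₀¹ ψ_B(γ)(γ⁻¹(s)) ds. -/
open Set MeasureTheory

/-- The centered log-ratio (CLR) transform `ψ_B`, expressed in terms of the
derivative function `g = γ′` of a warping function:
`ψ_B(γ)(t) = log γ′(t) − ∫₀¹ log γ′(s) ds`. -/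
noncomputable def clr (g : ℝ → ℝ) (t : ℝ) : ℝ :=
  Real.log (g t) - ∫ s in (0:ℝ)..1, Real.log (g s)

/-- The inverse CLR transform `ψ_B⁻¹(h)(t) = (∫₀ᵗ exp h) / (∫₀¹ exp h)`. -/
noncomputable def psiInv (h : ℝ → ℝ) (t : ℝ) : ℝ :=
  (∫ s in (0:ℝ)..t, Real.exp (h s)) / ∫ s in (0:ℝ)..1, Real.exp (h s)

/-- `γ` is a warping function in `Γ₁`, with (continuous) derivative `γ′` on `[0,1]`
bounded by `0 < m ≤ γ′ ≤ M`. -/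
def IsWarping (γ γ' : ℝ → ℝ) (m M : ℝ) : Prop :=
  γ 0 = 0 ∧ γ 1 = 1 ∧ Set.MapsTo γ (Set.Icc 0 1) (Set.Icc 0 1) ∧
  (∀ t ∈ Set.Icc (0:ℝ) 1, HasDerivWithinAt γ (γ' t) (Set.Icc 0 1) t) ∧
  ContinuousOn γ' (Set.Icc 0 1) ∧ 0 < m ∧
  ∀ t ∈ Set.Icc (0:ℝ) 1, m ≤ γ' t ∧ γ' t ≤ M

/-! Since `γ ∘ δ = id`, the chain rule gives `δ' = (γ' ∘ δ)⁻¹`, and `clr` turns the reciprocal into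
a sign: `clr δ' = -clr (γ' ∘ δ)`. The functions `clr (γ' ∘ δ)` and `clr γ' ∘ δ` both differ from
`log ∘ γ' ∘ δ` by a constant, and the former has mean zero, so it is `clr γ' ∘ δ` minus its mean. -/

theorem mul_eq_one_of_hasDerivWithinAt_of_leftInvOn {𝕜 : Type*} [NontriviallyNormedField 𝕜]
    {f g : 𝕜 → 𝕜} {f' g' x : 𝕜} {s t : Set 𝕜} (hs : UniqueDiffWithinAt 𝕜 s x) (hx : x ∈ s)
    (hf : HasDerivWithinAt f f' t (g x)) (hg : HasDerivWithinAt g g' s x)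
    (hst : MapsTo g s t) (hfg : LeftInvOn f g s) : f' * g' = 1 :=
  have hcomp : HasDerivWithinAt (f ∘ g) (f' * g') s x := hf.comp x hg hst
  have hid : HasDerivWithinAt (f ∘ g) 1 s x := (hasDerivWithinAt_id x s).congr hfg (hfg hx)
  hs.eq_deriv s hcomp hid

theorem aestronglyMeasurable_restrict_Icc_of_hasDerivWithinAt {E : Type*} [NormedAddCommGroup E]
    [NormedSpace ℝ E] [CompleteSpace E] {f f' : ℝ → E} {a b : ℝ}
    (hf : ∀ t ∈ Icc a b, HasDerivWithinAt f (f' t) (Icc a b) t) :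
    AEStronglyMeasurable f' (volume.restrict (Icc a b)) := by
  have hderiv : ∀ t ∈ Ioo a b, deriv f t = f' t := fun t ht ↦
    ((hf t (Ioo_subset_Icc_self ht)).hasDerivAt (Icc_mem_nhds ht.1 ht.2)).deriv
  rw [← restrict_Ioo_eq_restrict_Icc]
  exact (aestronglyMeasurable_deriv f _).congr
    ((ae_restrict_mem measurableSet_Ioo).mono hderiv)

theorem abs_log_le_max_abs_log {m M x : ℝ} (hm : 0 < m) (hx : x ∈ Icc m M) :
    |Real.log x| ≤ max |Real.log m| |Real.log M| :=
  have hx₀ : 0 < x := hm.trans_le hx.1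
  abs_le_max_abs_abs (Real.log_le_log hm hx.1) (Real.log_le_log hx₀ hx.2)

theorem integrableOn_log_of_mapsTo_Icc {α : Type*} [MeasurableSpace α] {μ : Measure α} {s : Set α}
    {g : α → ℝ} {m M : ℝ} (hs : MeasurableSet s) (hμs : μ s ≠ ⊤) (hm : 0 < m)
    (hg : AEMeasurable g (μ.restrict s)) (hbound : MapsTo g s (Icc m M)) :
    IntegrableOn (fun x ↦ Real.log (g x)) s μ :=
  IntegrableOn.of_bound hμs.lt_top hg.log.aestronglyMeasurable (max |Real.log m| |Real.log M|)
    ((ae_restrict_mem hs).mono fun _ hx ↦ abs_log_le_max_abs_log hm (hbound hx))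

theorem clr_congr {g h : ℝ → ℝ} {t : ℝ} (hgh : EqOn g h (Icc 0 1)) (ht : t ∈ Icc (0 : ℝ) 1) :
    clr g t = clr h t := by
  have hint : ∫ s in (0 : ℝ)..1, Real.log (g s) = ∫ s in (0 : ℝ)..1, Real.log (h s) := by
    refine intervalIntegral.integral_congr fun s hs ↦ ?_
    rw [uIcc_of_le zero_le_one] at hs
    exact congrArg Real.log (hgh hs)
  rw [clr, clr, hint, hgh ht]

theorem clr_inv (g : ℝ → ℝ) (t : ℝ) : clr g⁻¹ t = -clr g t := by
  simp only [clr, Pi.inv_apply, Real.log_inv, intervalIntegral.integral_neg]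
  ring

theorem clr_comp {g φ : ℝ → ℝ}
    (hint : IntervalIntegrable (fun s ↦ Real.log (g (φ s))) volume 0 1) (t : ℝ) :
    clr (g ∘ φ) t = clr g (φ t) - ∫ s in (0 : ℝ)..1, clr g (φ s) := by
  have hmean : ∫ s in (0 : ℝ)..1, clr g (φ s) =
      (∫ s in (0 : ℝ)..1, Real.log (g (φ s))) - ∫ s in (0 : ℝ)..1, Real.log (g s) := by
    simp only [clr]
    rw [intervalIntegral.integral_sub hint intervalIntegrable_const,
      intervalIntegral.integral_const, sub_zero, one_smul]
  rw [hmean]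
  simp only [clr, Function.comp_apply]
  ring

theorem clr_inverse_general {γ γ' δ δ' : ℝ → ℝ} {m M t : ℝ}
    (hγ : ∀ t ∈ Icc (0 : ℝ) 1, HasDerivWithinAt γ (γ' t) (Icc 0 1) t)
    (hδ : ∀ t ∈ Icc (0 : ℝ) 1, HasDerivWithinAt δ (δ' t) (Icc 0 1) t)
    (hm : 0 < m) (hbound : MapsTo γ' (Icc 0 1) (Icc m M))
    (hmaps : MapsTo δ (Icc 0 1) (Icc 0 1)) (hinv : LeftInvOn γ δ (Icc 0 1))
    (ht : t ∈ Icc (0 : ℝ) 1) :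
    clr δ' t = -(clr γ' (δ t)) + ∫ s in (0 : ℝ)..1, clr γ' (δ s) := by
  have hrecip : EqOn δ' (γ' ∘ δ)⁻¹ (Icc 0 1) := fun s hs ↦
    eq_inv_of_mul_eq_one_right <| mul_eq_one_of_hasDerivWithinAt_of_leftInvOn
      (uniqueDiffOn_Icc_zero_one s hs) hs (hγ (δ s) (hmaps hs)) (hδ s hs) hmaps hinv
  have hmeas : AEMeasurable (γ' ∘ δ) (volume.restrict (Icc 0 1)) :=
    (aestronglyMeasurable_restrict_Icc_of_hasDerivWithinAt hδ).aemeasurable.inv.congr <|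
      (ae_restrict_mem measurableSet_Icc).mono fun s hs ↦ inv_eq_iff_eq_inv.mpr (hrecip hs)
  have hint : IntervalIntegrable (fun s ↦ Real.log (γ' (δ s))) volume 0 1 :=
    (intervalIntegrable_iff_integrableOn_Icc_of_le zero_le_one).mpr <|
      integrableOn_log_of_mapsTo_Icc measurableSet_Icc measure_Icc_lt_top.ne hm hmeas
        (hbound.comp hmaps)
  calc
    clr δ' t = clr (γ' ∘ δ)⁻¹ t := clr_congr hrecip ht
    _ = -clr (γ' ∘ δ) t := clr_inv _ t
    _ = -(clr γ' (δ t)) + ∫ s in (0 : ℝ)..1, clr γ' (δ s) := by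
      rw [clr_comp hint, neg_sub, sub_eq_neg_add]

/-- for a warping function `γ ∈ Γ₁` with inverse `δ = γ⁻¹ ∈ Γ₁`
(with derivative `δ′`), the CLR transform of the inverse satisfies
`ψ_B(γ⁻¹)(t) = −ψ_B(γ)(γ⁻¹ t) + ∫₀¹ ψ_B(γ)(γ⁻¹ s) ds` for all `t ∈ [0,1]`. -/
theorem clr_inverse
    (γ γ' δ δ' : ℝ → ℝ) (m M mδ Mδ : ℝ)
    (hγ : IsWarping γ γ' m M) (hδ : IsWarping δ δ' mδ Mδ)
    (hinv₁ : ∀ t ∈ Set.Icc (0:ℝ) 1, δ (γ t) = t)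
    (hinv₂ : ∀ t ∈ Set.Icc (0:ℝ) 1, γ (δ t) = t) :
    ∀ t ∈ Set.Icc (0:ℝ) 1,
      clr δ' t = -(clr γ' (δ t)) + ∫ s in (0:ℝ)..1, clr γ' (δ s) := by
  obtain ⟨_, _, _, hderivγ, _, hm, hbound⟩ := hγ
  obtain ⟨_, _, hmaps, hderivδ, _⟩ := hδ
  exact fun _ ht ↦ clr_inverse_general hderivγ hderivδ hm hbound hmaps hinv₂ ht
end

section
/- (Finite-sample form of Lemma 1.) Let γ₁, …, γₙ, γ*, γ₀ be warping functions in Γ₁ such that the average of the CLR transforms satisfies (1/n)·Σᵢ₌₁ⁿ ψ_B(γᵢ)(t) = ψ_B(γ*)(t) for all t ∈ [0,1]. Then (1/n)·Σᵢ₌₁ⁿ ψ_B(γᵢ ∘ γ₀)(t) = ψ_B(γ* ∘ γ₀)(t) for all t ∈ [0,1]. -/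
open Set MeasureTheory

/-!
Centering at the mean over `[0,1]` is linear and does not see additive constants. Hence the
logarithm of the chain rule says that the CLR transform of `γ ∘ φ` is the recentred function
`ψ_B(γ) ∘ φ` plus `ψ_B(φ)`, which is affine in `ψ_B(γ)` and so commutes with averaging.
-/

section Centered

variable {E ι : Type*} [NormedAddCommGroup E] [NormedSpace ℝ E] {f g : ℝ → E} {t : ℝ}

/-- The function `f` minus its mean over `[0,1]`. The CLR transform of a warping function is the
centered logarithm of its derivative. -/
noncomputable def centered (f : ℝ → E) (t : ℝ) : E :=
  f t - ∫ s in (0 : ℝ)..1, f s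

theorem centered_congr (hfg : EqOn f g (Icc 0 1)) : EqOn (centered f) (centered g) (Icc 0 1) := by
  intro t ht
  rw [← uIcc_of_le zero_le_one] at hfg
  rw [centered, centered, intervalIntegral.integral_congr hfg, hfg (Icc_subset_uIcc ht)]

theorem centered_add (hf : IntervalIntegrable f volume 0 1)
    (hg : IntervalIntegrable g volume 0 1) :
    centered (fun s => f s + g s) t = centered f t + centered g t := by
  simp only [centered, intervalIntegral.integral_add hf hg, add_sub_add_comm]

theorem centered_sub_const [CompleteSpace E] (hf : IntervalIntegrable f volume 0 1) (c : E) :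
    centered (fun s => f s - c) = centered f := by
  ext t
  simp [centered, intervalIntegral.integral_sub hf intervalIntegrable_const]

theorem centered_sum_smul {I : Finset ι} {F : ι → ℝ → E}
    (hF : ∀ i ∈ I, IntervalIntegrable (F i) volume 0 1) (w : ι → ℝ) :
    centered (fun s => ∑ i ∈ I, w i • F i s) t = ∑ i ∈ I, w i • centered (F i) t := by
  have integral_sum : ∫ s in (0 : ℝ)..1, ∑ i ∈ I, w i • F i s =
      ∑ i ∈ I, w i • ∫ s in (0 : ℝ)..1, F i s := by
    simp only [← intervalIntegral.integral_smul]
    exact intervalIntegral.integral_finsetSum fun i hi => (hF i hi).smul (w i)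
  simp only [centered, integral_sum, smul_sub, Finset.sum_sub_distrib]

end Centered

section Composition

variable {ι : Type*} {g φ ρ : ℝ → ℝ} {t : ℝ}

theorem clr_eq_centered_log (g : ℝ → ℝ) : clr g = centered fun s => Real.log (g s) :=
  rfl

theorem centered_clr_comp
    (hgφ : IntervalIntegrable (fun s => Real.log (g (φ s))) volume 0 1) :
    centered (fun s => clr g (φ s)) = centered fun s => Real.log (g (φ s)) :=
  centered_sub_const hgφ _

theorem clr_comp_mul (hgφ : IntervalIntegrable (fun s => Real.log (g (φ s))) volume 0 1)
    (hρ : IntervalIntegrable (fun s => Real.log (ρ s)) volume 0 1)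
    (hgφ_ne : ∀ s ∈ Icc (0 : ℝ) 1, g (φ s) ≠ 0) (hρ_ne : ∀ s ∈ Icc (0 : ℝ) 1, ρ s ≠ 0)
    (ht : t ∈ Icc (0 : ℝ) 1) :
    clr (fun s => g (φ s) * ρ s) t = centered (fun s => clr g (φ s)) t + clr ρ t := by
  have log_mul : EqOn (fun s => Real.log (g (φ s) * ρ s))
      (fun s => Real.log (g (φ s)) + Real.log (ρ s)) (Icc 0 1) :=
    fun s hs => Real.log_mul (hgφ_ne s hs) (hρ_ne s hs)
  rw [clr_eq_centered_log, centered_congr log_mul ht, centered_add hgφ hρ,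
    centered_clr_comp hgφ, clr_eq_centered_log]

theorem sum_mul_clr_comp_mul {I : Finset ι} {w : ι → ℝ} (hw : ∑ i ∈ I, w i = 1)
    {G : ι → ℝ → ℝ}
    (hGφ : ∀ i ∈ I, IntervalIntegrable (fun s => Real.log (G i (φ s))) volume 0 1)
    (hρ : IntervalIntegrable (fun s => Real.log (ρ s)) volume 0 1)
    (hGφ_ne : ∀ i ∈ I, ∀ s ∈ Icc (0 : ℝ) 1, G i (φ s) ≠ 0)
    (hρ_ne : ∀ s ∈ Icc (0 : ℝ) 1, ρ s ≠ 0) (ht : t ∈ Icc (0 : ℝ) 1) :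
    ∑ i ∈ I, w i * clr (fun s => G i (φ s) * ρ s) t =
      centered (fun s => ∑ i ∈ I, w i * clr (G i) (φ s)) t + clr ρ t := by
  have clr_comp_integrable : ∀ i ∈ I, IntervalIntegrable (fun s => clr (G i) (φ s)) volume 0 1 :=
    fun i hi => (hGφ i hi).sub intervalIntegrable_const
  calc ∑ i ∈ I, w i * clr (fun s => G i (φ s) * ρ s) t
    _ = ∑ i ∈ I, w i * (centered (fun s => clr (G i) (φ s)) t + clr ρ t) :=
      Finset.sum_congr rfl fun i hi => by rw [clr_comp_mul (hGφ i hi) hρ (hGφ_ne i hi) hρ_ne ht]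
    _ = ∑ i ∈ I, w i * centered (fun s => clr (G i) (φ s)) t + clr ρ t := by
      simp only [mul_add, Finset.sum_add_distrib, ← Finset.sum_mul, hw, one_mul]
    _ = centered (fun s => ∑ i ∈ I, w i * clr (G i) (φ s)) t + clr ρ t :=
      congrArg (· + clr ρ t) (centered_sum_smul clr_comp_integrable w).symm

theorem intervalIntegrable_log_comp (hg : ContinuousOn g (Icc 0 1))
    (hg_ne : ∀ s ∈ Icc (0 : ℝ) 1, g s ≠ 0) (hφ : ContinuousOn φ (Icc 0 1))
    (hφ_maps : MapsTo φ (Icc 0 1) (Icc 0 1)) :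
    IntervalIntegrable (fun s => Real.log (g (φ s))) volume 0 1 :=
  ((hg.comp hφ hφ_maps).log fun s hs => hg_ne (φ s) (hφ_maps hs)).intervalIntegrable_of_Icc
    zero_le_one

end Composition

namespace IsWarping

variable {γ γ' : ℝ → ℝ} {m M : ℝ}

theorem mapsTo (h : IsWarping γ γ' m M) : MapsTo γ (Icc 0 1) (Icc 0 1) :=
  h.2.2.1

theorem hasDerivWithinAt (h : IsWarping γ γ' m M) :
    ∀ t ∈ Icc (0 : ℝ) 1, HasDerivWithinAt γ (γ' t) (Icc 0 1) t :=
  h.2.2.2.1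

theorem continuousOn_deriv (h : IsWarping γ γ' m M) : ContinuousOn γ' (Icc 0 1) :=
  h.2.2.2.2.1

theorem deriv_pos (h : IsWarping γ γ' m M) : ∀ t ∈ Icc (0 : ℝ) 1, 0 < γ' t :=
  fun t ht => h.2.2.2.2.2.1.trans_le (h.2.2.2.2.2.2 t ht).1

end IsWarping

theorem clr_mean_comp_general {ι : Type*} {I : Finset ι} {w : ι → ℝ} (hw : ∑ i ∈ I, w i = 1)
    {g : ι → ℝ → ℝ} {gs φ φ' : ℝ → ℝ}
    (hg : ∀ i ∈ I, ContinuousOn (g i) (Icc 0 1))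
    (hg_pos : ∀ i ∈ I, ∀ t ∈ Icc (0 : ℝ) 1, 0 < g i t)
    (hgs : ContinuousOn gs (Icc 0 1)) (hgs_pos : ∀ t ∈ Icc (0 : ℝ) 1, 0 < gs t)
    (hφ_maps : MapsTo φ (Icc 0 1) (Icc 0 1))
    (hφ : ∀ t ∈ Icc (0 : ℝ) 1, HasDerivWithinAt φ (φ' t) (Icc 0 1) t)
    (hφ' : ContinuousOn φ' (Icc 0 1)) (hφ'_pos : ∀ t ∈ Icc (0 : ℝ) 1, 0 < φ' t)
    (hmean : ∀ t ∈ Icc (0 : ℝ) 1, ∑ i ∈ I, w i * clr (g i) t = clr gs t) :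
    ∀ t ∈ Icc (0 : ℝ) 1, ∑ i ∈ I, w i * clr (fun s => g i (φ s) * φ' s) t =
      clr (fun s => gs (φ s) * φ' s) t := by
  intro t ht
  have log_comp_integrable {h : ℝ → ℝ} (hh : ContinuousOn h (Icc 0 1))
      (hh_pos : ∀ t ∈ Icc (0 : ℝ) 1, 0 < h t) :
      IntervalIntegrable (fun s => Real.log (h (φ s))) volume 0 1 :=
    intervalIntegrable_log_comp hh (fun s hs => (hh_pos s hs).ne')
      (HasDerivWithinAt.continuousOn hφ) hφ_maps
  have hφ'_ne : ∀ s ∈ Icc (0 : ℝ) 1, φ' s ≠ 0 := fun s hs => (hφ'_pos s hs).ne'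
  have log_deriv_integrable : IntervalIntegrable (fun s => Real.log (φ' s)) volume 0 1 :=
    intervalIntegrable_log_comp hφ' hφ'_ne continuousOn_id (mapsTo_id _)
  calc ∑ i ∈ I, w i * clr (fun s => g i (φ s) * φ' s) t
    _ = centered (fun s => ∑ i ∈ I, w i * clr (g i) (φ s)) t + clr φ' t :=
      sum_mul_clr_comp_mul hw (fun i hi => log_comp_integrable (hg i hi) (hg_pos i hi))
        log_deriv_integrable (fun i hi s hs => (hg_pos i hi _ (hφ_maps hs)).ne') hφ'_ne ht
    _ = centered (fun s => clr gs (φ s)) t + clr φ' t := by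
      rw [centered_congr (fun s hs => hmean (φ s) (hφ_maps hs)) ht]
    _ = clr (fun s => gs (φ s) * φ' s) t :=
      (clr_comp_mul (log_comp_integrable hgs hgs_pos) log_deriv_integrable
        (fun s hs => (hgs_pos _ (hφ_maps hs)).ne') hφ'_ne ht).symm

/-- finite-sample form of Lemma 1: let `γ₁, …, γₙ, γ*, γ₀ ∈ Γ₁` be
warping functions such that `(1/n)·Σᵢ ψ_B(γᵢ)(t) = ψ_B(γ*)(t)` on `[0,1]`.  Then
`(1/n)·Σᵢ ψ_B(γᵢ ∘ γ₀)(t) = ψ_B(γ* ∘ γ₀)(t)` on `[0,1]`, where the derivative of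
`γᵢ ∘ γ₀` is `t ↦ γᵢ′(γ₀ t)·γ₀′(t)` and similarly for `γ* ∘ γ₀`. -/
theorem clr_mean_comp
    (n : ℕ) (hn : 0 < n)
    (γ : Fin n → ℝ → ℝ) (γ' : Fin n → ℝ → ℝ) (m M : Fin n → ℝ)
    (γs γs' γ₀ γ₀' : ℝ → ℝ) (ms Ms m₀ M₀ : ℝ)
    (hγ : ∀ i, IsWarping (γ i) (γ' i) (m i) (M i))
    (hγs : IsWarping γs γs' ms Ms)
    (hγ₀ : IsWarping γ₀ γ₀' m₀ M₀)
    (hmean : ∀ t ∈ Set.Icc (0:ℝ) 1,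
      (1 / (n:ℝ)) * ∑ i : Fin n, clr (γ' i) t = clr γs' t) :
    ∀ t ∈ Set.Icc (0:ℝ) 1,
      (1 / (n:ℝ)) * ∑ i : Fin n, clr (fun s => γ' i (γ₀ s) * γ₀' s) t =
        clr (fun s => γs' (γ₀ s) * γ₀' s) t := by
  have weights_sum : ∑ _i : Fin n, 1 / (n : ℝ) = 1 := by simp [hn.ne']
  simpa only [Finset.mul_sum] using clr_mean_comp_general weights_sum
    (fun i _ => (hγ i).continuousOn_deriv) (fun i _ => (hγ i).deriv_pos)
    hγs.continuousOn_deriv hγs.deriv_pos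
    hγ₀.mapsTo hγ₀.hasDerivWithinAt hγ₀.continuousOn_deriv hγ₀.deriv_pos
    (by simpa only [Finset.mul_sum] using hmean)
end

section
/- (Failure of composition isometry for the CLR transform.) There exist warping functions γ₁, γ₂, γ ∈ Γ₁ such that the L²([0,1]) distance between the CLR transforms is not preserved by right composition with γ: ‖ψ_B(γ₁ ∘ γ) − ψ_B(γ₂ ∘ γ)‖ ≠ ‖ψ_B(γ₁) − ψ_B(γ₂)‖, where ‖·‖ denotes the L²([0,1]) norm. -/
open Set MeasureTheory

/-!
Since `clr` turns products into sums, the factor `γ'` cancels from the distance between the CLR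
transforms of `γ₁ ∘ γ` and `γ₂ ∘ γ`. For `γ₁ = ψ_B⁻¹(h)` and `γ₂ = id`, the squared distance between
the transforms is thus the variance of `h` under the uniform distribution on `[0, 1]`, and composing
with `γ` replaces it by the variance of `h ∘ γ`. With `h t = t` and `γ t = (t + t²) / 2` these
variances are `1 / 12` and `61 / 720`.
-/

theorem exists_isWarping_of_deriv_pos {γ γ' : ℝ → ℝ} (hγ0 : γ 0 = 0) (hγ1 : γ 1 = 1)
    (hderiv : ∀ t ∈ Icc (0 : ℝ) 1, HasDerivWithinAt γ (γ' t) (Icc 0 1) t)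
    (hcont : ContinuousOn γ' (Icc 0 1)) (hpos : ∀ t ∈ Icc (0 : ℝ) 1, 0 < γ' t) :
    ∃ m M, IsWarping γ γ' m M := by
  have hmono : MonotoneOn γ (Icc 0 1) :=
    monotoneOn_of_hasDerivWithinAt_nonneg (convex_Icc 0 1)
      (fun t ht => (hderiv t ht).continuousWithinAt)
      (fun t ht => (hderiv t (interior_subset ht)).mono interior_subset)
      (fun t ht => (hpos t (interior_subset ht)).le)
  have hmaps : MapsTo γ (Icc 0 1) (Icc 0 1) := by
    simpa only [hγ0, hγ1] using hmono.mapsTo_Icc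
  have hne : (Icc (0 : ℝ) 1).Nonempty := nonempty_Icc.2 zero_le_one
  obtain ⟨tmin, htmin, hmin⟩ := isCompact_Icc.exists_isMinOn hne hcont
  obtain ⟨tmax, -, hmax⟩ := isCompact_Icc.exists_isMaxOn hne hcont
  exact ⟨γ' tmin, γ' tmax, hγ0, hγ1, hmaps, hderiv, hcont, hpos tmin htmin,
    fun t ht => ⟨hmin ht, hmax ht⟩⟩

theorem isWarping_id : IsWarping (fun t => t) (fun _ => 1) 1 1 :=
  ⟨rfl, rfl, mapsTo_id _, fun t _ => hasDerivWithinAt_id t _, continuousOn_const, one_pos,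
    fun _ _ => ⟨le_rfl, le_rfl⟩⟩

theorem intervalIntegral_exp_pos {h : ℝ → ℝ} {a b : ℝ} (hab : a < b)
    (hh : ContinuousOn h (Icc a b)) : 0 < ∫ s in a..b, Real.exp (h s) :=
  intervalIntegral.intervalIntegral_pos_of_pos
    (hh.rexp.intervalIntegrable_of_Icc hab.le) (fun _ => Real.exp_pos _) hab

theorem hasDerivWithinAt_psiInv {h : ℝ → ℝ} (hh : ContinuousOn h (Icc 0 1)) {t : ℝ}
    (ht : t ∈ Icc (0 : ℝ) 1) :
    HasDerivWithinAt (psiInv h) (Real.exp (h t) / ∫ s in (0 : ℝ)..1, Real.exp (h s))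
      (Icc 0 1) t := by
  have : Fact (t ∈ Icc (0 : ℝ) 1) := ⟨ht⟩
  have hint : IntervalIntegrable (fun s => Real.exp (h s)) volume 0 t :=
    (hh.rexp.mono (Icc_subset_Icc_right ht.2)).intervalIntegrable_of_Icc ht.1
  exact (intervalIntegral.integral_hasDerivWithinAt_right hint
    (hh.rexp.stronglyMeasurableAtFilter_nhdsWithin measurableSet_Icc t)
    (hh.rexp t ht)).div_const _

theorem exists_isWarping_psiInv {h : ℝ → ℝ} (hh : ContinuousOn h (Icc 0 1)) :
    ∃ m M, IsWarping (psiInv h)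
      (fun t => Real.exp (h t) / ∫ s in (0 : ℝ)..1, Real.exp (h s)) m M :=
  exists_isWarping_of_deriv_pos (by simp [psiInv])
    (div_self (intervalIntegral_exp_pos one_pos hh).ne')
    (fun _ ht => hasDerivWithinAt_psiInv hh ht) (hh.rexp.div_const _)
    (fun _ _ => div_pos (Real.exp_pos _) (intervalIntegral_exp_pos one_pos hh))

theorem exists_isWarping_half_add_sq :
    ∃ m M, IsWarping (fun t => (t + t ^ 2) / 2) (fun t => (1 + 2 * t) / 2) m M := by
  refine exists_isWarping_of_deriv_pos (by norm_num) (by norm_num) (fun t _ => ?_) (by fun_prop)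
    (fun t ht => by linarith [ht.1])
  simpa using (((hasDerivAt_id t).add (hasDerivAt_pow 2 t)).div_const 2).hasDerivWithinAt

theorem IsWarping.deriv_ne_zero {γ γ' : ℝ → ℝ} {m M : ℝ} (hγ : IsWarping γ γ' m M) {t : ℝ}
    (ht : t ∈ Icc (0 : ℝ) 1) : γ' t ≠ 0 := by
  obtain ⟨-, -, -, -, -, hm, hbound⟩ := hγ
  exact (hm.trans_le (hbound t ht).1).ne'

theorem IsWarping.intervalIntegrable_log_deriv {γ γ' : ℝ → ℝ} {m M : ℝ}
    (hγ : IsWarping γ γ' m M) :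
    IntervalIntegrable (fun t => Real.log (γ' t)) volume 0 1 := by
  have hcont : ContinuousOn γ' (Icc 0 1) := hγ.2.2.2.2.1
  exact (hcont.log fun _ ht => hγ.deriv_ne_zero ht).intervalIntegrable_of_Icc zero_le_one

theorem clr_mul {g k : ℝ → ℝ} (hg : ∀ t ∈ Icc (0 : ℝ) 1, g t ≠ 0)
    (hk : ∀ t ∈ Icc (0 : ℝ) 1, k t ≠ 0)
    (hg_int : IntervalIntegrable (fun t => Real.log (g t)) volume 0 1)
    (hk_int : IntervalIntegrable (fun t => Real.log (k t)) volume 0 1)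
    {t : ℝ} (ht : t ∈ Icc (0 : ℝ) 1) :
    clr (fun s => g s * k s) t = clr g t + clr k t := by
  have hlog : ∀ s ∈ Icc (0 : ℝ) 1, Real.log (g s * k s) = Real.log (g s) + Real.log (k s) :=
    fun s hs => Real.log_mul (hg s hs) (hk s hs)
  have hlog_integral : ∫ s in (0 : ℝ)..1, Real.log (g s * k s) =
      (∫ s in (0 : ℝ)..1, Real.log (g s)) + ∫ s in (0 : ℝ)..1, Real.log (k s) := by
    rw [← intervalIntegral.integral_add hg_int hk_int]
    exact intervalIntegral.integral_congr (by rwa [uIcc_of_le zero_le_one])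
  rw [clr, clr, clr, hlog t ht, hlog_integral]
  ring

theorem clr_const (c t : ℝ) : clr (fun _ => c) t = 0 := by
  simp [clr]

theorem clr_exp_div_const {φ : ℝ → ℝ} (hφ : IntervalIntegrable φ volume 0 1) {c : ℝ}
    (hc : c ≠ 0) (t : ℝ) :
    clr (fun s => Real.exp (φ s) / c) t = φ t - ∫ s in (0 : ℝ)..1, φ s := by
  have hlog : ∀ s, Real.log (Real.exp (φ s) / c) = φ s - Real.log c := fun s => by
    rw [Real.log_div (Real.exp_ne_zero _) hc, Real.log_exp]
  simp only [clr, hlog]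
  rw [intervalIntegral.integral_sub hφ intervalIntegrable_const, intervalIntegral.integral_const]
  simp

/-- The `L²([0, 1])` distance between the CLR transforms of two warping functions, given, as for
`clr`, through their derivatives. -/
noncomputable def clrDist (g₁ g₂ : ℝ → ℝ) : ℝ :=
  Real.sqrt (∫ t in (0 : ℝ)..1, (clr g₁ t - clr g₂ t) ^ 2)

theorem clrDist_mul_right {g₁ g₂ k : ℝ → ℝ} (hg₁ : ∀ t ∈ Icc (0 : ℝ) 1, g₁ t ≠ 0)
    (hg₂ : ∀ t ∈ Icc (0 : ℝ) 1, g₂ t ≠ 0) (hk : ∀ t ∈ Icc (0 : ℝ) 1, k t ≠ 0)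
    (hg₁_int : IntervalIntegrable (fun t => Real.log (g₁ t)) volume 0 1)
    (hg₂_int : IntervalIntegrable (fun t => Real.log (g₂ t)) volume 0 1)
    (hk_int : IntervalIntegrable (fun t => Real.log (k t)) volume 0 1) :
    clrDist (fun t => g₁ t * k t) (fun t => g₂ t * k t) = clrDist g₁ g₂ := by
  refine congrArg Real.sqrt (intervalIntegral.integral_congr fun t ht => ?_)
  rw [uIcc_of_le zero_le_one] at ht
  simp only [clr_mul hg₁ hk hg₁_int hk_int ht, clr_mul hg₂ hk hg₂_int hk_int ht,
    add_sub_add_right_eq_sub]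

theorem integral_sub_integral_sq {φ : ℝ → ℝ} (hφ : IntervalIntegrable φ volume 0 1)
    (hφ_sq : IntervalIntegrable (fun t => φ t ^ 2) volume 0 1) :
    ∫ t in (0 : ℝ)..1, (φ t - ∫ s in (0 : ℝ)..1, φ s) ^ 2 =
      (∫ t in (0 : ℝ)..1, φ t ^ 2) - (∫ t in (0 : ℝ)..1, φ t) ^ 2 := by
  set μ := ∫ s in (0 : ℝ)..1, φ s with hμ
  calc ∫ t in (0 : ℝ)..1, (φ t - μ) ^ 2
      = ∫ t in (0 : ℝ)..1, (φ t ^ 2 - 2 * μ * φ t + μ ^ 2) := by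
        congr 1 with t
        ring
    _ = (∫ t in (0 : ℝ)..1, φ t ^ 2) - 2 * μ * μ + μ ^ 2 := by
        rw [intervalIntegral.integral_add (hφ_sq.sub (hφ.const_mul _)) intervalIntegrable_const,
          intervalIntegral.integral_sub hφ_sq (hφ.const_mul _),
          intervalIntegral.integral_const_mul, intervalIntegral.integral_const, ← hμ]
        simp
    _ = (∫ t in (0 : ℝ)..1, φ t ^ 2) - μ ^ 2 := by ring

theorem clrDist_exp_div_const_const {φ : ℝ → ℝ} (hφ : IntervalIntegrable φ volume 0 1)
    (hφ_sq : IntervalIntegrable (fun t => φ t ^ 2) volume 0 1) {c : ℝ} (hc : c ≠ 0) (d : ℝ) :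
    clrDist (fun t => Real.exp (φ t) / c) (fun _ => d) =
      Real.sqrt ((∫ t in (0 : ℝ)..1, φ t ^ 2) - (∫ t in (0 : ℝ)..1, φ t) ^ 2) := by
  simp only [clrDist, clr_exp_div_const hφ hc, clr_const, sub_zero,
    integral_sub_integral_sq hφ hφ_sq]

theorem IsWarping.clrDist_exp_comp_mul_deriv {γ γ' : ℝ → ℝ} {m M : ℝ} (hγ : IsWarping γ γ' m M)
    {h : ℝ → ℝ} (hh : ContinuousOn h (Icc 0 1)) {c : ℝ} (hc : c ≠ 0) {d : ℝ} (hd : d ≠ 0) :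
    clrDist (fun t => Real.exp (h (γ t)) / c * γ' t) (fun t => d * γ' t) =
      Real.sqrt ((∫ t in (0 : ℝ)..1, h (γ t) ^ 2) - (∫ t in (0 : ℝ)..1, h (γ t)) ^ 2) := by
  have ⟨_, _, hmaps, hderiv, _⟩ := hγ
  have hcomp : ContinuousOn (fun t => h (γ t)) (Icc 0 1) :=
    hh.comp (fun t ht => (hderiv t ht).continuousWithinAt) hmaps
  have hexp : ∀ t ∈ Icc (0 : ℝ) 1, Real.exp (h (γ t)) / c ≠ 0 := fun _ _ =>
    div_ne_zero (Real.exp_ne_zero _) hc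
  have hexp_int : IntervalIntegrable (fun t => Real.log (Real.exp (h (γ t)) / c)) volume 0 1 :=
    ((hcomp.rexp.div_const c).log hexp).intervalIntegrable_of_Icc zero_le_one
  rw [clrDist_mul_right hexp (fun _ _ => hd) (fun _ ht => hγ.deriv_ne_zero ht) hexp_int
    intervalIntegrable_const hγ.intervalIntegrable_log_deriv]
  exact clrDist_exp_div_const_const (hcomp.intervalIntegrable_of_Icc zero_le_one)
    ((hcomp.pow 2).intervalIntegrable_of_Icc zero_le_one) hc d

theorem integral_half_add_sq : ∫ t in (0 : ℝ)..1, (t + t ^ 2) / 2 = 5 / 12 := by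
  rw [intervalIntegral.integral_div, intervalIntegral.integral_add (by simp) (by simp),
    integral_id, integral_pow]
  norm_num

theorem integral_half_add_sq_sq : ∫ t in (0 : ℝ)..1, ((t + t ^ 2) / 2) ^ 2 = 31 / 120 := by
  have hexpand : ∀ t : ℝ, ((t + t ^ 2) / 2) ^ 2 = (t ^ 2 + 2 * t ^ 3 + t ^ 4) / 4 := fun t => by
    ring
  simp only [hexpand]
  rw [intervalIntegral.integral_div,
    intervalIntegral.integral_add (Continuous.intervalIntegrable (by fun_prop) _ _) (by simp),
    intervalIntegral.integral_add (by simp) (Continuous.intervalIntegrable (by fun_prop) _ _),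
    intervalIntegral.integral_const_mul, integral_pow, integral_pow, integral_pow]
  norm_num

/-- failure of composition isometry for the CLR transform: there
exist warping functions `γ₁, γ₂, γ ∈ Γ₁` such that
`‖ψ_B(γ₁ ∘ γ) − ψ_B(γ₂ ∘ γ)‖ ≠ ‖ψ_B(γ₁) − ψ_B(γ₂)‖` in `L²([0,1])`, where the
derivative of `γᵢ ∘ γ` is `t ↦ γᵢ′(γ t)·γ′(t)`. -/
theorem clr_not_composition_isometry :
    ∃ (γ₁ γ₁' γ₂ γ₂' γ γ' : ℝ → ℝ) (m₁ M₁ m₂ M₂ m M : ℝ),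
      IsWarping γ₁ γ₁' m₁ M₁ ∧ IsWarping γ₂ γ₂' m₂ M₂ ∧ IsWarping γ γ' m M ∧
      Real.sqrt (∫ t in (0:ℝ)..1,
          (clr (fun s => γ₁' (γ s) * γ' s) t -
            clr (fun s => γ₂' (γ s) * γ' s) t) ^ 2) ≠
        Real.sqrt (∫ t in (0:ℝ)..1, (clr γ₁' t - clr γ₂' t) ^ 2) := by
  have hcont : ContinuousOn (fun t : ℝ => t) (Icc 0 1) := continuousOn_id
  have hnorm : ∫ s in (0 : ℝ)..1, Real.exp s ≠ 0 := (intervalIntegral_exp_pos one_pos hcont).ne'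
  obtain ⟨m₁, M₁, hγ₁⟩ := exists_isWarping_psiInv hcont
  obtain ⟨m, M, hγ⟩ := exists_isWarping_half_add_sq
  refine ⟨_, _, _, _, _, _, m₁, M₁, 1, 1, m, M, hγ₁, isWarping_id, hγ, ?_⟩
  change clrDist _ _ ≠ clrDist _ _
  rw [hγ.clrDist_exp_comp_mul_deriv hcont hnorm one_ne_zero,
    clrDist_exp_div_const_const (by simp) (by simp) hnorm,
    integral_half_add_sq, integral_half_add_sq_sq, integral_id, integral_pow,
    Ne, Real.sqrt_inj (by norm_num) (by norm_num)]
  norm_num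
end
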